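/- For every ρ ∈ (1/3, 1), ∫_{−∞}^{∞} c(x)·ψ_ρ(x) dx < ρ, while for ρ = 1/3 one has ∫_{−∞}^{∞} c(x)·ψ_{1/3}(x) dx = 1/3. Hence for ρ > 1/3 the value ρ is not the average cost of the controlled process under the stationary Markov control w_ρ, whereas the pair (V_{1/3}, 1/3) is compatible in the sense that ρ equals the average cost under a minimizing selector. -/

import Mathlib

/-!
The average cost is computed in closed form. For `ξ ≤ 0` the real line splits at `ξ` and `0` into
pieces on which `e^{-|x|} e^{-2|x-ξ|}` is a pure exponential, and the three pieces sum to
`(4/3) e^ξ - (2/3) e^{2ξ}`; since `e^{-2|x-ξ|}` has mass `1`, the average cost is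
`1 - (4/3) e^ξ + (2/3) e^{2ξ}`. Substituting `e^{ξ_ρ} = (3/2)(1-ρ)`, this equals
`ρ - (3/2)(1-ρ)(ρ - 1/3)`, from which both claims are read off.
-/

open MeasureTheory Real

/-- `ξ_ρ = log(3/2) + log(1-ρ)`. -/
noncomputable def xiRho (ρ : ℝ) : ℝ := Real.log (3 / 2) + Real.log (1 - ρ)

/-- The running cost `c(x) = 1 - e^{-|x|}`. -/
noncomputable def runCost (x : ℝ) : ℝ := 1 - Real.exp (-|x|)

/-- The invariant probability density `ψ_ρ(x) = e^{-2|x-ξ_ρ|}` of the diffusion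
controlled by `w_ρ(x) = -sgn(x-ξ_ρ)`. -/
noncomputable def psiRho (ρ x : ℝ) : ℝ := Real.exp (-(2 * |x - xiRho ρ|))

/-- An integral over `ℝ` computed from its three pieces. -/
lemma integral_three_pieces {f : ℝ → ℝ} {a b : ℝ} (hab : a ≤ b)
    (h1 : IntegrableOn f (Set.Iic a)) (h2 : IntegrableOn f (Set.Ioc a b))
    (h3 : IntegrableOn f (Set.Ioi b)) :
    Integrable f ∧
      ∫ x, f x = (∫ x in Set.Iic a, f x) + (∫ x in Set.Ioc a b, f x) + ∫ x in Set.Ioi b, f x := by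
  have h12 : IntegrableOn f (Set.Iic b) := by
    rw [← Set.Iic_union_Ioc_eq_Iic hab]; exact h1.union h2
  have hI : Integrable f := by
    rw [← integrableOn_univ, ← Set.Iic_union_Ioi (a := b)]; exact h12.union h3
  refine ⟨hI, ?_⟩
  rw [← intervalIntegral.integral_Iic_add_Ioi h12 h3, ← Set.Iic_union_Ioc_eq_Iic hab,
    setIntegral_union (Set.Iic_disjoint_Ioc le_rfl) measurableSet_Ioc h1 h2]

lemma integral_laplace (ξ : ℝ) :
    Integrable (fun x : ℝ => rexp (-(2 * |x - ξ|))) ∧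
      ∫ x : ℝ, rexp (-(2 * |x - ξ|)) = 1 := by
  have e1 : Set.EqOn (fun x : ℝ => rexp (-(2 * |x - ξ|)))
      (fun x => rexp (-2 * ξ) * rexp (2 * x)) (Set.Iic ξ) := by
    intro x hx
    simp only [Set.mem_Iic] at hx
    simp only
    rw [abs_of_nonpos (by linarith), ← Real.exp_add]
    ring_nf
  have e3 : Set.EqOn (fun x : ℝ => rexp (-(2 * |x - ξ|)))
      (fun x => rexp (2 * ξ) * rexp (-2 * x)) (Set.Ioi ξ) := by
    intro x hx
    simp only [Set.mem_Ioi] at hx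
    simp only
    rw [abs_of_nonneg (by linarith), ← Real.exp_add]
    ring_nf
  have i1 := IntegrableOn.congr_fun
    (Integrable.const_mul (integrableOn_exp_mul_Iic (a := 2) (by norm_num) ξ) (rexp (-2 * ξ)))
    e1.symm measurableSet_Iic
  have i3 := IntegrableOn.congr_fun
    (Integrable.const_mul (integrableOn_exp_mul_Ioi (a := -2) (by norm_num) ξ) (rexp (2 * ξ)))
    e3.symm measurableSet_Ioi
  obtain ⟨hI, h⟩ := integral_three_pieces le_rfl i1 (by simp) i3
  refine ⟨hI, ?_⟩
  rw [h, setIntegral_congr_fun measurableSet_Iic e1, setIntegral_congr_fun measurableSet_Ioi e3,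
    integral_const_mul, integral_const_mul, integral_exp_mul_Iic (by norm_num),
    integral_exp_mul_Ioi (by norm_num)]
  have : rexp (-2 * ξ) * rexp (2 * ξ) = 1 := by
    rw [← Real.exp_add]; simp
  simp only [Set.Ioc_self, Measure.restrict_empty, integral_zero_measure]
  linarith

lemma integral_exp_abs_mul_laplace {ξ : ℝ} (hξ : ξ ≤ 0) :
    Integrable (fun x : ℝ => rexp (-|x|) * rexp (-(2 * |x - ξ|))) ∧
      ∫ x : ℝ, rexp (-|x|) * rexp (-(2 * |x - ξ|)) =
        4 / 3 * rexp ξ - 2 / 3 * rexp ξ ^ 2 := by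
  have e1 : Set.EqOn (fun x : ℝ => rexp (-|x|) * rexp (-(2 * |x - ξ|)))
      (fun x => rexp (-2 * ξ) * rexp (3 * x)) (Set.Iic ξ) := by
    intro x hx
    simp only [Set.mem_Iic] at hx
    simp only
    rw [abs_of_nonpos (a := x - ξ) (by linarith), abs_of_nonpos (by linarith), ← Real.exp_add,
      ← Real.exp_add]
    ring_nf
  have e2 : Set.EqOn (fun x : ℝ => rexp (-|x|) * rexp (-(2 * |x - ξ|)))
      (fun x => rexp (2 * ξ) * rexp (-1 * x)) (Set.Ioc ξ 0) := by
    intro x hx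
    simp only [Set.mem_Ioc] at hx
    simp only
    rw [abs_of_nonneg (a := x - ξ) (by linarith), abs_of_nonpos (by linarith), ← Real.exp_add,
      ← Real.exp_add]
    ring_nf
  have e3 : Set.EqOn (fun x : ℝ => rexp (-|x|) * rexp (-(2 * |x - ξ|)))
      (fun x => rexp (2 * ξ) * rexp (-3 * x)) (Set.Ioi 0) := by
    intro x hx
    simp only [Set.mem_Ioi] at hx
    simp only
    rw [abs_of_nonneg (a := x - ξ) (by linarith), abs_of_nonneg (by linarith), ← Real.exp_add,
      ← Real.exp_add]
    ring_nf
  have i1 := IntegrableOn.congr_fun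
    (Integrable.const_mul (integrableOn_exp_mul_Iic (a := 3) (by norm_num) ξ) (rexp (-2 * ξ)))
    e1.symm measurableSet_Iic
  have i2 : IntegrableOn (fun x : ℝ => rexp (-|x|) * rexp (-(2 * |x - ξ|))) (Set.Ioc ξ 0) :=
    (Continuous.integrableOn_Icc (by fun_prop)).mono_set Set.Ioc_subset_Icc_self
  have i3 := IntegrableOn.congr_fun
    (Integrable.const_mul (integrableOn_exp_mul_Ioi (a := -3) (by norm_num) 0) (rexp (2 * ξ)))
    e3.symm measurableSet_Ioi
  obtain ⟨hI, h⟩ := integral_three_pieces hξ i1 i2 i3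
  refine ⟨hI, ?_⟩
  have hm : ∫ x in Set.Ioc ξ 0, rexp (-1 * x) = rexp (-ξ) - 1 := by
    rw [← intervalIntegral.integral_of_le hξ,
      intervalIntegral.integral_comp_mul_left (fun x => rexp x) (by norm_num : (-1 : ℝ) ≠ 0),
      integral_exp]
    simp
  rw [h, setIntegral_congr_fun measurableSet_Iic e1, setIntegral_congr_fun measurableSet_Ioc e2,
    setIntegral_congr_fun measurableSet_Ioi e3,
    integral_const_mul, integral_const_mul, integral_const_mul, integral_exp_mul_Iic (by norm_num),
    integral_exp_mul_Ioi (by norm_num), hm]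
  have h1 : rexp (-2 * ξ) * rexp (3 * ξ) = rexp ξ := by
    rw [← Real.exp_add]; ring_nf
  have h2 : rexp (2 * ξ) * rexp (-ξ) = rexp ξ := by
    rw [← Real.exp_add]; ring_nf
  have h3 : rexp (2 * ξ) = rexp ξ ^ 2 := by
    rw [← Real.exp_nat_mul]; norm_num
  rw [mul_zero, Real.exp_zero]
  linear_combination (1 / 3) * h1 + h2 - (2 / 3) * h3

lemma exp_xiRho {ρ : ℝ} (hρ : ρ < 1) : rexp (xiRho ρ) = 3 / 2 * (1 - ρ) := by
  rw [xiRho, Real.exp_add, Real.exp_log (by norm_num), Real.exp_log (by linarith)]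

/-- The average cost under `w_ρ`; the hypothesis `1 / 3 ≤ ρ` is what makes `ξ_ρ ≤ 0`. -/
lemma integral_runCost_mul_psiRho {ρ : ℝ} (h1 : 1 / 3 ≤ ρ) (h2 : ρ < 1) :
    ∫ x : ℝ, runCost x * psiRho ρ x = ρ - 3 / 2 * (1 - ρ) * (ρ - 1 / 3) := by
  have hξ : xiRho ρ ≤ 0 := by
    rw [← Real.exp_le_one_iff, exp_xiRho h2]; linarith
  obtain ⟨ia, ha⟩ := integral_laplace (xiRho ρ)
  obtain ⟨ib, hb⟩ := integral_exp_abs_mul_laplace hξ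
  simp only [runCost, psiRho, sub_mul, one_mul]
  rw [integral_sub ia ib, ha, hb, exp_xiRho h2]
  ring

/-- For every `ρ ∈ (1/3, 1)` the average cost under `w_ρ` is strictly smaller
than `ρ`, while for `ρ = 1/3` it equals `1/3`; hence for `ρ > 1/3` the value
`ρ` is not the average cost under `w_ρ`, whereas `(V_{1/3}, 1/3)` is
compatible. -/
theorem average_cost_compatibility :
    (∀ ρ ∈ Set.Ioo (1 / 3 : ℝ) 1, ∫ x : ℝ, runCost x * psiRho ρ x < ρ) ∧
    (∫ x : ℝ, runCost x * psiRho (1 / 3) x = 1 / 3) := by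
  constructor
  · rintro ρ ⟨h1, h2⟩
    rw [integral_runCost_mul_psiRho h1.le h2]
    have := mul_pos (sub_pos.2 h2) (sub_pos.2 h1)
    linarith
  · rw [integral_runCost_mul_psiRho le_rfl (by norm_num)]
    norm_num
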